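/- Let C > 0, 0 < p < 1, and let t > 0 satisfy C·t^p < 1. Define the sequence (φ_n) recursively by φ_0 = t and φ_{n+1} = (1 − C·φ_n^p)·φ_n. Then φ_n > 0 for all n, φ_n^{−p} ≥ pC·n + t^{−p} for all n (equivalently φ_n ≤ (pC·n + t^{−p})^{−1/p}), and consequently the series ∑_{n=0}^∞ φ_n converges. -/

import Mathlib

/-!
Passing to `φₙ ^ (-p)` linearizes the recursion. Bernoulli's inequality with the negative exponent
`-p` gives `φₙ₊₁ ^ (-p) = (1 - C φₙ ^ p) ^ (-p) * φₙ ^ (-p) ≥ (1 + p C φₙ ^ p) * φₙ ^ (-p)`, and the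
last product is `φₙ ^ (-p) + p C`. Hence `φₙ ^ (-p)` grows at least linearly, so `φₙ ^ q` is
`O(n ^ (-q / p))`, which is summable for every `q > p`.
-/

theorem one_add_mul_self_le_rpow_one_add_of_nonpos {s p : ℝ} (hs : -1 < s) (hp : p ≤ 0) :
    1 + p * s ≤ (1 + s) ^ p := by
  have hs' : 0 < 1 + s := by linarith
  have hlog : Real.log (1 + s) ≤ s := by linarith [Real.log_le_sub_one_of_pos hs']
  calc 1 + p * s ≤ Real.log (1 + s) * p + 1 := by
        linarith [mul_le_mul_of_nonpos_left hlog hp]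
    _ ≤ Real.exp (Real.log (1 + s) * p) := Real.add_one_le_exp _
    _ = (1 + s) ^ p := (Real.rpow_def_of_pos hs' p).symm

theorem rpow_neg_add_mul_le_one_sub_mul_rpow_mul_self_rpow_neg {C p x : ℝ} (hp : 0 ≤ p)
    (hx : 0 < x) (hCx : C * x ^ p < 1) :
    x ^ (-p) + p * C ≤ ((1 - C * x ^ p) * x) ^ (-p) := by
  have bernoulli : 1 + p * (C * x ^ p) ≤ (1 - C * x ^ p) ^ (-p) := by
    simpa [← sub_eq_add_neg] using one_add_mul_self_le_rpow_one_add_of_nonpos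
      (s := -(C * x ^ p)) (neg_lt_neg hCx) (neg_nonpos.mpr hp)
  have cancel : x ^ p * x ^ (-p) = 1 := by simp [← Real.rpow_add hx]
  calc x ^ (-p) + p * C = (1 + p * (C * x ^ p)) * x ^ (-p) := by
        linear_combination -(p * C) * cancel
    _ ≤ (1 - C * x ^ p) ^ (-p) * x ^ (-p) := by gcongr
    _ = ((1 - C * x ^ p) * x) ^ (-p) := (Real.mul_rpow (sub_nonneg.mpr hCx.le) hx.le).symm

section Sequence

variable {C p : ℝ} {φ : ℕ → ℝ}

theorem pos_of_eq_one_sub_mul_rpow_mul_self (hC : 0 ≤ C) (hp : 0 ≤ p) (h₀ : 0 < φ 0)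
    (hC₀ : C * φ 0 ^ p < 1) (hφ : ∀ n, φ (n + 1) = (1 - C * φ n ^ p) * φ n) (n : ℕ) :
    0 < φ n := by
  suffices 0 < φ n ∧ C * φ n ^ p < 1 from this.1
  induction n with
  | zero => exact ⟨h₀, hC₀⟩
  | succ n ih =>
    obtain ⟨hpos, hlt⟩ := ih
    have hpos' : 0 < φ (n + 1) := hφ n ▸ mul_pos (sub_pos.mpr hlt) hpos
    have hle : φ (n + 1) ≤ φ n :=
      hφ n ▸ mul_le_of_le_one_left hpos.le (sub_le_self 1 (by positivity))
    exact ⟨hpos', lt_of_le_of_lt (by gcongr) hlt⟩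

theorem mul_add_rpow_neg_le_rpow_neg (hp : 0 ≤ p) (hpos : ∀ n, 0 < φ n)
    (hφ : ∀ n, φ (n + 1) ≤ (1 - C * φ n ^ p) * φ n) (n : ℕ) :
    p * C * n + φ 0 ^ (-p) ≤ φ n ^ (-p) := by
  induction n with
  | zero => simp
  | succ n ih =>
    have hlt : C * φ n ^ p < 1 :=
      sub_pos.mp (pos_of_mul_pos_left ((hpos (n + 1)).trans_le (hφ n)) (hpos n).le)
    calc p * C * (n + 1 : ℕ) + φ 0 ^ (-p) = p * C * n + φ 0 ^ (-p) + p * C := by push_cast; ring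
      _ ≤ φ n ^ (-p) + p * C := by gcongr
      _ ≤ ((1 - C * φ n ^ p) * φ n) ^ (-p) :=
        rpow_neg_add_mul_le_one_sub_mul_rpow_mul_self_rpow_neg hp (hpos n) hlt
      _ ≤ φ (n + 1) ^ (-p) :=
        Real.rpow_le_rpow_of_nonpos (hpos (n + 1)) (hφ n) (neg_nonpos.mpr hp)

theorem summable_rpow_of_mul_le_rpow_neg {a q : ℝ} (ha : 0 < a) (hp : 0 < p) (hpq : p < q)
    (hpos : ∀ n, 0 < φ n) (hφ : ∀ n : ℕ, a * n ≤ φ n ^ (-p)) :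
    Summable fun n ↦ φ n ^ q := by
  have hexp : -(q / p) < -1 := neg_lt_neg ((one_lt_div hp).mpr hpq)
  refine .of_norm_bounded_eventually_nat
    ((Real.summable_nat_rpow.mpr hexp).mul_left (a ^ (-(q / p)))) ?_
  filter_upwards [Filter.eventually_gt_atTop 0] with n hn
  have hn' : (0 : ℝ) < n := Nat.cast_pos.mpr hn
  calc ‖φ n ^ q‖ = φ n ^ q := Real.norm_of_nonneg (Real.rpow_nonneg (hpos n).le q)
    _ = (φ n ^ (-p)) ^ (-(q / p)) := by
      rw [← Real.rpow_mul (hpos n).le, neg_mul_neg, mul_div_cancel₀ q hp.ne']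
    _ ≤ (a * n) ^ (-(q / p)) :=
      Real.rpow_le_rpow_of_nonpos (mul_pos ha hn') (hφ n) (by linarith)
    _ = a ^ (-(q / p)) * (n : ℝ) ^ (-(q / p)) := Real.mul_rpow ha.le hn'.le

end Sequence

theorem iterated_power_rate_sequence_summable_general
    (C p t : ℝ) (hC : 0 < C) (hp : 0 < p) (ht : 0 < t) (htC : C * t ^ p < 1)
    (φ : ℕ → ℝ) (hφ0 : φ 0 = t)
    (hφrec : ∀ n : ℕ, φ (n + 1) = (1 - C * φ n ^ p) * φ n) :
    (∀ n : ℕ, 0 < φ n) ∧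
    (∀ n : ℕ, p * C * n + t ^ (-p) ≤ φ n ^ (-p)) ∧
    (∀ n : ℕ, φ n ≤ (p * C * n + t ^ (-p)) ^ (-(1 / p))) ∧
    ∀ q : ℝ, p < q → Summable fun n ↦ φ n ^ q := by
  subst hφ0
  have hpos := pos_of_eq_one_sub_mul_rpow_mul_self hC.le hp.le ht htC hφrec
  have hlower := mul_add_rpow_neg_le_rpow_neg hp.le hpos fun n ↦ (hφrec n).le
  refine ⟨hpos, hlower, fun n ↦ ?_, fun q hpq ↦ ?_⟩
  · rw [one_div, ← inv_neg]
    exact (Real.le_rpow_inv_iff_of_neg (hpos n) (by positivity) (neg_neg_of_pos hp)).mpr (hlower n)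
  · exact summable_rpow_of_mul_le_rpow_neg (mul_pos hp hC) hp hpq hpos fun n ↦
      (le_add_of_nonneg_right (by positivity)).trans (hlower n)

/-- The numerical estimate in the proof of **Theorem 1.6**: for `C > 0`, `0 < p < 1`
and `t > 0` with `C·t^p < 1`, the recursively defined sequence `φ₀ = t`,
`φ_{n+1} = (1 - C·φₙ^p)·φₙ` is positive, satisfies `φₙ^{-p} ≥ pC·n + t^{-p}`
(equivalently `φₙ ≤ (pC·n + t^{-p})^{-1/p}`), and is summable. -/
theorem iterated_power_rate_sequence_summable
    (C p t : ℝ) (hC : 0 < C) (hp0 : 0 < p) (hp1 : p < 1)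
    (ht : 0 < t) (htC : C * t ^ p < 1)
    (φ : ℕ → ℝ) (hφ0 : φ 0 = t)
    (hφrec : ∀ n : ℕ, φ (n + 1) = (1 - C * φ n ^ p) * φ n) :
    (∀ n : ℕ, 0 < φ n) ∧
    (∀ n : ℕ, p * C * n + t ^ (-p) ≤ φ n ^ (-p)) ∧
    (∀ n : ℕ, φ n ≤ (p * C * n + t ^ (-p)) ^ (-(1 / p))) ∧
    Summable φ := by
  obtain ⟨hpos, hlower, hupper, hsum⟩ :=
    iterated_power_rate_sequence_summable_general C p t hC hp0 ht htC φ hφ0 hφrec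
  exact ⟨hpos, hlower, hupper, by simpa only [Real.rpow_one] using hsum 1 hp1⟩
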